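/- arXiv:1303.5655 — 3 statements merged into one kernel-verified Lean document; each statement's English description precedes it below -/
import Mathlib

section
/- Let M be a real m×d matrix, D a real d×n matrix, and let y = M D α₀ for some vector α₀ ∈ ℝⁿ. If 2·‖α₀‖₀ < spark(MD), then α₀ is the unique solution of the ℓ₀-minimization problem min ‖α‖₀ subject to y = M D α; that is, for every α₁ ∈ ℝⁿ with M D α₁ = y and ‖α₁‖₀ ≤ ‖α₀‖₀, one has α₁ = α₀. -/
/-- ℓ₀ "norm": the number of nonzero entries of a vector. -/
noncomputable def l0norm {n : ℕ} (α : Fin n → ℝ) : ℕ :=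
  (Finset.univ.filter fun i => α i ≠ 0).card

/-- Uniqueness of the sparsest representation: if `2‖α₀‖₀ < spark(MD)`
(i.e. every nonzero vector in the null space of `MD` has more than `2‖α₀‖₀`
nonzero entries), then `α₀` is the unique solution of the ℓ₀ problem
`min ‖α‖₀ s.t. y = MDα`. -/
theorem sparse_representation_uniqueness
    {m d n : ℕ} (M : Matrix (Fin m) (Fin d) ℝ) (D : Matrix (Fin d) (Fin n) ℝ)
    (α₀ : Fin n → ℝ) (y : Fin m → ℝ) (hy : y = (M * D).mulVec α₀)
    (hspark : ∀ α : Fin n → ℝ, α ≠ 0 → (M * D).mulVec α = 0 →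
      2 * l0norm α₀ < l0norm α) :
    ∀ α₁ : Fin n → ℝ, (M * D).mulVec α₁ = y → l0norm α₁ ≤ l0norm α₀ → α₁ = α₀ := by
  intro α₁ h1 hle
  by_contra hne
  have h := hspark (α₁ - α₀) (sub_ne_zero.mpr hne)
    (by rw [Matrix.mulVec_sub, h1, hy, sub_self])
  have hsub : l0norm (α₁ - α₀) ≤ l0norm α₁ + l0norm α₀ := by
    unfold l0norm
    refine le_trans (Finset.card_le_card ?_) (Finset.card_union_le _ _)
    intro i hi
    simp only [Finset.mem_union, Finset.mem_filter, Finset.mem_univ, true_and,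
      Pi.sub_apply] at hi ⊢
    by_contra hcon
    push Not at hcon
    exact hi (by rw [hcon.1, hcon.2, sub_self])
  omega
end

section
/- Let A be a real m×n matrix satisfying the RIP of order 2k with constant δ_{2k} < 1. Let y = A α₀ + e with ‖e‖₂ ≤ ε and ‖α₀‖₀ ≤ k. Then any vector α̂ with ‖α̂‖₀ ≤ k (in particular any minimizer of ‖α‖₀ subject to ‖y − Aα‖₂ ≤ ε) satisfying ‖y − A α̂‖₂ ≤ ε obeys ‖α₀ − α̂‖₂ ≤ 2ε / √(1 − δ_{2k}). -/
/-- Euclidean (ℓ₂) norm of a vector. -/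
noncomputable def norm2 {n : ℕ} (x : Fin n → ℝ) : ℝ :=
  Real.sqrt (∑ i, x i ^ 2)

lemma norm2_eq_norm {n : ℕ} (x : Fin n → ℝ) : norm2 x = ‖WithLp.toLp 2 x‖ := by
  simp [norm2, EuclideanSpace.norm_eq]

lemma norm2_sub_le {n : ℕ} (x y : Fin n → ℝ) : norm2 (x - y) ≤ norm2 x + norm2 y := by
  simp only [norm2_eq_norm, WithLp.toLp_sub]
  exact norm_sub_le _ _

lemma l0norm_sub_le {n : ℕ} (x y : Fin n → ℝ) : l0norm (x - y) ≤ l0norm x + l0norm y := by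
  unfold l0norm
  refine le_trans (Finset.card_le_card ?_) (Finset.card_union_le _ _)
  intro i hi
  simp only [Finset.mem_filter, Finset.mem_univ, true_and, Finset.mem_union, Pi.sub_apply] at hi ⊢
  by_contra! h
  exact hi (by rw [h.1, h.2, sub_zero])

/-- Stability of ℓ₀-recovery under the RIP: if `A` satisfies the RIP of order `2k`
with constant `δ < 1`, `y = Aα₀ + e` with `‖e‖₂ ≤ ε` and `‖α₀‖₀ ≤ k`, then any
`αhat` with `‖αhat‖₀ ≤ k` and `‖y − Aαhat‖₂ ≤ ε` satisfies
`‖α₀ − αhat‖₂ ≤ 2ε/√(1 − δ)`. -/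
theorem rip_l0_stability
    {m n : ℕ} (A : Matrix (Fin m) (Fin n) ℝ) (k : ℕ) (δ ε : ℝ)
    (hδ0 : 0 ≤ δ) (hδ1 : δ < 1)
    (hRIP : ∀ α : Fin n → ℝ, l0norm α ≤ 2 * k →
      (1 - δ) * (norm2 α) ^ 2 ≤ (norm2 (A.mulVec α)) ^ 2 ∧
      (norm2 (A.mulVec α)) ^ 2 ≤ (1 + δ) * (norm2 α) ^ 2)
    (α₀ : Fin n → ℝ) (e : Fin m → ℝ) (hα₀ : l0norm α₀ ≤ k) (he : norm2 e ≤ ε)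
    (y : Fin m → ℝ) (hy : y = A.mulVec α₀ + e)
    (αhat : Fin n → ℝ) (hαh : l0norm αhat ≤ k) (hfeas : norm2 (y - A.mulVec αhat) ≤ ε) :
    norm2 (α₀ - αhat) ≤ 2 * ε / Real.sqrt (1 - δ) := by
  have hA : A.mulVec (α₀ - αhat) = (y - A.mulVec αhat) - e := by
    rw [Matrix.mulVec_sub, hy]
    abel
  have h1 := (hRIP (α₀ - αhat) (by have := l0norm_sub_le α₀ αhat; omega)).1
  have h2 : norm2 (A.mulVec (α₀ - αhat)) ≤ 2 * ε := by
    rw [hA]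
    have := norm2_sub_le (y - A.mulVec αhat) e
    linarith
  have hpos : 0 < 1 - δ := by linarith
  have h3 : 0 ≤ norm2 (A.mulVec (α₀ - αhat)) := Real.sqrt_nonneg _
  rw [le_div_iff₀ (Real.sqrt_pos.mpr hpos)]
  refine le_trans (abs_le_of_sq_le_sq' ?_ h3).2 h2
  rw [mul_pow, Real.sq_sqrt hpos.le]
  linarith
end

section
/- Let M be a real m×d matrix and D a real d×n matrix. Suppose that for every index set T of columns of D with |T| ≤ 2k one has range(D_T) ∩ Null(M) = {0} (i.e., 2k < D-spark(M)). Let y = M x₀ where x₀ = D α₀ for some α₀ with ‖α₀‖₀ ≤ k. Then every minimizer α̂ of the problem min ‖α‖₀ subject to y = M D α satisfies D α̂ = x₀; that is, the signal x₀ is perfectly recovered. -/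
/-- Uniqueness for signal recovery: if `2k < D-spark(M)`, i.e. for every index
set `T` with `|T| ≤ 2k` we have `range(D_T) ∩ Null(M) = {0}`, then for a signal
`x₀ = Dα₀` with `‖α₀‖₀ ≤ k` and measurements `y = Mx₀`, every minimizer `α̂` of
`min ‖α‖₀ s.t. y = MDα` satisfies `Dα̂ = x₀`. -/
theorem signal_recovery_uniqueness
    {m d n : ℕ} (M : Matrix (Fin m) (Fin d) ℝ) (D : Matrix (Fin d) (Fin n) ℝ) (k : ℕ)
    (hDspark : ∀ T : Finset (Fin n), T.card ≤ 2 * k →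
      ∀ β : Fin n → ℝ, (∀ j ∉ T, β j = 0) →
        M.mulVec (D.mulVec β) = 0 → D.mulVec β = 0)
    (α₀ : Fin n → ℝ) (hα₀ : l0norm α₀ ≤ k)
    (x₀ : Fin d → ℝ) (hx₀ : x₀ = D.mulVec α₀)
    (y : Fin m → ℝ) (hy : y = M.mulVec x₀)
    (αhat : Fin n → ℝ)
    (hfeas : M.mulVec (D.mulVec αhat) = y)
    (hmin : ∀ α : Fin n → ℝ, M.mulVec (D.mulVec α) = y → l0norm αhat ≤ l0norm α) :
    D.mulVec αhat = x₀ := by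
  subst hx₀
  have h1 : l0norm αhat ≤ k := (hmin α₀ hy.symm).trans hα₀
  have h := hDspark
    ((Finset.univ.filter fun i => αhat i ≠ 0) ∪ (Finset.univ.filter fun i => α₀ i ≠ 0))
    (by
      refine (Finset.card_union_le _ _).trans ?_
      unfold l0norm at h1 hα₀
      omega)
    (αhat - α₀)
    (by
      intro j hj
      simp only [Finset.mem_union, Finset.mem_filter, Finset.mem_univ, true_and, not_or,
        not_not] at hj
      simp [hj.1, hj.2])
    (by rw [Matrix.mulVec_sub, Matrix.mulVec_sub, hfeas, hy, sub_self])
  rw [Matrix.mulVec_sub] at h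
  exact sub_eq_zero.mp h
end
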